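/- The sequence 56211383760397 + 44546738095860·k is prime for each k = 0, 1, ..., 22, giving a 23-term arithmetic progression of primes. -/

import Mathlib

/-- Modular exponentiation `a ^ e % p` by repeated squaring (valid for `e < 2 ^ f`). -/
def powMod (p a : ℕ) : ℕ → ℕ → ℕ
  | 0, _ => 1 % p
  | f + 1, e => Nat.pow (powMod p a f (e / 2)) 2 % p * Nat.pow a (e % 2) % p

lemma powMod_eq (p a f : ℕ) : ∀ e, e < 2 ^ f → powMod p a f e = a ^ e % p := by
  induction f with
  | zero =>
    intro e he
    obtain rfl : e = 0 := by simpa using he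
    simp [powMod]
  | succ f ih =>
    intro e he
    have h2 : e / 2 < 2 ^ f := by
      rw [pow_succ] at he
      omega
    rw [powMod, ih _ h2, Nat.pow_eq, Nat.pow_eq, ← Nat.pow_mod, Nat.mod_mul_mod, ← pow_mul,
      ← pow_add]
    congr 2
    omega

/-- One step of a Pratt certificate: `a` has order exactly `p - 1` modulo `p`, where `l` lists the
prime factors of `p - 1` with multiplicity. -/
def stepOk (p a : ℕ) (l : List ℕ) : Prop :=
  1 < p ∧ p < 2 ^ 50 ∧ l.prod = p - 1 ∧ powMod p a 50 (p - 1) = 1 ∧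
    ∀ q ∈ l, powMod p a 50 ((p - 1) / q) ≠ 1

instance (p a : ℕ) (l : List ℕ) : Decidable (stepOk p a l) := by
  unfold stepOk
  infer_instance

lemma prime_of_stepOk {p a : ℕ} {l : List ℕ} (h : stepOk p a l) (hl : ∀ q ∈ l, q.Prime) :
    p.Prime := by
  obtain ⟨hp, hlt, hprod, h1, h2⟩ := h
  have key : ∀ n : ℕ, n < 2 ^ 50 → ((a : ZMod p) ^ n = 1 ↔ powMod p a 50 n = 1) := by
    intro n hn
    have := ZMod.natCast_eq_natCast_iff' (a ^ n) 1 p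
    rw [Nat.mod_eq_of_lt hp, ← powMod_eq p a 50 n hn] at this
    rw [← this]
    push_cast
    rfl
  refine lucas_primality p (a : ZMod p) ((key _ (by omega)).2 h1) ?_
  intro q hq hd hc
  rw [← hprod] at hd
  obtain ⟨r, hr, hqr⟩ := (Prime.dvd_prod_iff hq.prime).1 hd
  obtain rfl := (Nat.prime_dvd_prime_iff_eq hq (hl r hr)).1 hqr
  have hle : (p - 1) / q ≤ p - 1 := Nat.div_le_self _ _
  exact h2 q hr ((key _ (by omega)).1 hc)

/-- A table of certificates is valid if every row is, and the factors in each row are `2` or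
certified further down. -/
def tableOk : List (ℕ × ℕ × List ℕ) → Bool
  | [] => true
  | (p, a, l) :: t =>
    decide (stepOk p a l) && decide (∀ q ∈ l, q = 2 ∨ q ∈ t.map Prod.fst) && tableOk t

lemma prime_of_tableOk (t : List (ℕ × ℕ × List ℕ)) (h : tableOk t = true) :
    ∀ p ∈ t.map Prod.fst, p.Prime := by
  induction t with
  | nil => simp
  | cons x t ih =>
    obtain ⟨p, a, l⟩ := x
    simp only [tableOk, Bool.and_eq_true, decide_eq_true_eq] at h
    obtain ⟨⟨h1, h2⟩, h3⟩ := h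
    have ht := ih h3
    intro r hr
    rw [List.map_cons, List.mem_cons] at hr
    rcases hr with rfl | hr
    · refine prime_of_stepOk h1 fun q hq => ?_
      rcases h2 q hq with rfl | h
      · exact Nat.prime_two
      · exact ht q h
    · exact ht r hr

/-- Rows `(p, primitive root mod p, prime factorization of p - 1)`. -/
def prattTable : List (ℕ × ℕ × List ℕ) :=
  [(1036239621869317, 5, [2, 2, 3, 1319, 25589, 2558473]),
   (991692883773457, 5, [2, 2, 2, 2, 3, 20660268411947]),
   (947146145677597, 5, [2, 2, 3, 3, 3, 3, 2923290573079]),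
   (902599407581737, 7, [2, 2, 2, 3, 37608308649239]),
   (858052669485877, 2, [2, 2, 3, 233, 306885790231]),
   (813505931390017, 5, [2, 2, 2, 2, 2, 2, 3, 3, 241, 569, 1951, 5279]),
   (768959193294157, 2, [2, 2, 3, 73, 877807298281]),
   (724412455198297, 7, [2, 2, 2, 3, 29, 131, 24953, 318407]),
   (679865717102437, 2, [2, 2, 3, 3, 71, 139, 1913583829]),
   (635318979006577, 7, [2, 2, 2, 2, 3, 61, 61, 293, 12140129]),
   (590772240910717, 2, [2, 2, 3, 31, 1588097421803]),
   (546225502814857, 7, [2, 2, 2, 3, 3, 3, 6761, 374030731]),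
   (501678764718997, 2, [2, 2, 3, 41806563726583]),
   (457132026623137, 5, [2, 2, 2, 2, 2, 3, 83, 101, 568029577]),
   (412585288527277, 2, [2, 2, 3, 3, 302971, 37827721]),
   (368038550431417, 5, [2, 2, 2, 3, 9203, 1666297903]),
   (323491812335557, 2, [2, 2, 3, 59, 456909339457]),
   (278945074239697, 5, [2, 2, 2, 2, 3, 3, 47, 41215288747]),
   (234398336143837, 5, [2, 2, 3, 173, 108947, 1036363]),
   (189851598047977, 5, [2, 2, 2, 3, 12409, 637479511]),
   (145304859952117, 2, [2, 2, 3, 3, 3, 53, 1607, 3557, 4441]),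
   (100758121856257, 5, [2, 2, 2, 2, 2, 2, 2, 2, 3, 43, 3051057469]),
   (56211383760397, 2, [2, 2, 3, 109, 127, 751, 450581]),
   (41806563726583, 5, [2, 3, 3, 2357, 985399607]),
   (37608308649239, 11, [2, 18804154324619]),
   (20660268411947, 2, [2, 61, 169346462393]),
   (18804154324619, 2, [2, 13, 29, 43, 3433, 168943]),
   (2923290573079, 6, [2, 3, 227053, 2145821]),
   (1588097421803, 2, [2, 794048710901]),
   (877807298281, 17, [2, 2, 2, 3, 5, 11, 19, 2341, 14951]),
   (794048710901, 3, [2, 2, 5, 5, 17, 167, 257, 10883]),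
   (456909339457, 5, [2, 2, 2, 2, 2, 2, 3, 3, 3, 17, 29, 43, 12473]),
   (306885790231, 3, [2, 3, 5, 347, 29479903]),
   (169346462393, 3, [2, 2, 2, 37, 83, 419, 16451]),
   (41215288747, 5, [2, 3, 38371, 179021]),
   (3051057469, 2, [2, 2, 3, 19, 211, 63421]),
   (1913583829, 2, [2, 2, 3, 13, 677, 18119]),
   (1666297903, 3, [2, 3, 43, 409, 15791]),
   (985399607, 5, [2, 373, 1320911]),
   (637479511, 7, [2, 3, 5, 3779, 5623]),
   (568029577, 7, [2, 2, 2, 3, 23667899]),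
   (374030731, 17, [2, 3, 3, 3, 5, 1385299]),
   (37827721, 33, [2, 2, 2, 3, 3, 5, 7, 17, 883]),
   (29479903, 3, [2, 3, 41, 293, 409]),
   (23667899, 2, [2, 1459, 8111]),
   (12140129, 3, [2, 2, 2, 2, 2, 7, 11, 13, 379]),
   (2558473, 23, [2, 2, 2, 3, 7, 97, 157]),
   (2145821, 3, [2, 2, 5, 31, 3461]),
   (1385299, 2, [2, 3, 3, 76961]),
   (1320911, 7, [2, 5, 31, 4261]),
   (1036363, 2, [2, 3, 53, 3259]),
   (450581, 7, [2, 2, 5, 13, 1733]),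
   (318407, 5, [2, 11, 41, 353]),
   (302971, 3, [2, 3, 5, 10099]),
   (227053, 2, [2, 2, 3, 3, 7, 17, 53]),
   (179021, 2, [2, 2, 5, 8951]),
   (168943, 5, [2, 3, 37, 761]),
   (108947, 2, [2, 19, 47, 61]),
   (76961, 3, [2, 2, 2, 2, 2, 5, 13, 37]),
   (63421, 2, [2, 2, 3, 5, 7, 151]),
   (38371, 10, [2, 3, 5, 1279]),
   (25589, 2, [2, 2, 6397]),
   (24953, 3, [2, 2, 2, 3119]),
   (18119, 17, [2, 9059]),
   (16451, 7, [2, 5, 5, 7, 47]),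
   (15791, 29, [2, 5, 1579]),
   (14951, 19, [2, 5, 5, 13, 23]),
   (12473, 3, [2, 2, 2, 1559]),
   (12409, 7, [2, 2, 2, 3, 11, 47]),
   (10883, 2, [2, 5441]),
   (10099, 2, [2, 3, 3, 3, 11, 17]),
   (9203, 2, [2, 43, 107]),
   (9059, 2, [2, 7, 647]),
   (8951, 13, [2, 5, 5, 179]),
   (8111, 11, [2, 5, 811]),
   (6761, 3, [2, 2, 2, 5, 13, 13]),
   (6397, 2, [2, 2, 3, 13, 41]),
   (5623, 5, [2, 3, 937]),
   (5441, 3, [2, 2, 2, 2, 2, 2, 5, 17]),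
   (5279, 7, [2, 7, 13, 29]),
   (4441, 21, [2, 2, 2, 3, 5, 37]),
   (4261, 2, [2, 2, 3, 5, 71]),
   (3779, 2, [2, 1889]),
   (3557, 2, [2, 2, 7, 127]),
   (3461, 2, [2, 2, 5, 173]),
   (3433, 5, [2, 2, 2, 3, 11, 13]),
   (3259, 3, [2, 3, 3, 181]),
   (3119, 7, [2, 1559]),
   (2357, 2, [2, 2, 19, 31]),
   (2341, 7, [2, 2, 3, 3, 5, 13]),
   (1951, 3, [2, 3, 5, 5, 13]),
   (1889, 3, [2, 2, 2, 2, 2, 59]),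
   (1733, 2, [2, 2, 433]),
   (1607, 5, [2, 11, 73]),
   (1579, 3, [2, 3, 263]),
   (1559, 19, [2, 19, 41]),
   (1459, 3, [2, 3, 3, 3, 3, 3, 3]),
   (1319, 13, [2, 659]),
   (1279, 3, [2, 3, 3, 71]),
   (937, 5, [2, 2, 2, 3, 3, 13]),
   (883, 2, [2, 3, 3, 7, 7]),
   (811, 3, [2, 3, 3, 3, 3, 5]),
   (761, 6, [2, 2, 2, 5, 19]),
   (751, 3, [2, 3, 5, 5, 5]),
   (677, 2, [2, 2, 13, 13]),
   (659, 2, [2, 7, 47]),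
   (647, 5, [2, 17, 19]),
   (569, 3, [2, 2, 2, 71]),
   (433, 5, [2, 2, 2, 2, 3, 3, 3]),
   (419, 2, [2, 11, 19]),
   (409, 21, [2, 2, 2, 3, 17]),
   (379, 2, [2, 3, 3, 3, 7]),
   (373, 2, [2, 2, 3, 31]),
   (353, 3, [2, 2, 2, 2, 2, 11]),
   (347, 2, [2, 173]),
   (293, 2, [2, 2, 73]),
   (263, 5, [2, 131]),
   (257, 3, [2, 2, 2, 2, 2, 2, 2, 2]),
   (241, 7, [2, 2, 2, 2, 3, 5]),
   (233, 3, [2, 2, 2, 29]),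
   (211, 2, [2, 3, 5, 7]),
   (181, 2, [2, 2, 3, 3, 5]),
   (179, 2, [2, 89]),
   (173, 2, [2, 2, 43]),
   (167, 5, [2, 83]),
   (157, 5, [2, 2, 3, 13]),
   (151, 6, [2, 3, 5, 5]),
   (139, 2, [2, 3, 23]),
   (131, 2, [2, 5, 13]),
   (127, 3, [2, 3, 3, 7]),
   (109, 6, [2, 2, 3, 3, 3]),
   (107, 2, [2, 53]),
   (101, 2, [2, 2, 5, 5]),
   (97, 5, [2, 2, 2, 2, 2, 3]),
   (89, 3, [2, 2, 2, 11]),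
   (83, 2, [2, 41]),
   (73, 5, [2, 2, 2, 3, 3]),
   (71, 7, [2, 5, 7]),
   (61, 2, [2, 2, 3, 5]),
   (59, 2, [2, 29]),
   (53, 2, [2, 2, 13]),
   (47, 5, [2, 23]),
   (43, 3, [2, 3, 7]),
   (41, 6, [2, 2, 2, 5]),
   (37, 2, [2, 2, 3, 3]),
   (31, 3, [2, 3, 5]),
   (29, 2, [2, 2, 7]),
   (23, 5, [2, 11]),
   (19, 2, [2, 3, 3]),
   (17, 3, [2, 2, 2, 2]),
   (13, 2, [2, 2, 3]),
   (11, 2, [2, 5]),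
   (7, 3, [2, 3]),
   (5, 2, [2, 2]),
   (3, 2, [2])]

lemma prattTable_ok : tableOk prattTable = true := by
  decide +kernel

lemma progression_mem :
    ∀ k < 23, 56211383760397 + 44546738095860 * k ∈ prattTable.map Prod.fst := by
  decide +kernel

/-- The 23-term arithmetic progression of primes found by Frind, Jobling and
Underwood: `56211383760397 + 44546738095860·k` is prime for `k = 0, …, 22`. -/
theorem frind_jobling_underwood (k : ℕ) (hk : k ≤ 22) :
    Nat.Prime (56211383760397 + 44546738095860 * k) :=
  prime_of_tableOk _ prattTable_ok _ (progression_mem k (by omega))
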